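/- Let P be a finite pure weighted graded poset of rank d ≥ 2 with a standard weight scheme which is 2-skeleton regular with constants N^low_1, N^low_2, N^mid_1, R, where N^low_1 ≥ 3, N^mid_1 ≥ 2, and (N^low_2·N^low_1/N^mid_1 − 2)·R > N^low_1 − 2. Assume P is connected, each link P_x for x ∈ P(0) is connected, and there exist ν ≤ μ < 1 such that every nontrivial eigenvalue of the link adjacency operator A_x lies in [ν, μ] for all x ∈ P(0). Then every nontrivial eigenvalue λ of the adjacency operator A of P satisfies (ν/(N^low_1 − 1) − B)/(1 − ν) ≤ λ ≤ (μ/(N^low_1 − 1) − B)/(1 − μ), where B = (N^low_2·N^low_1 − N^mid_1)·R·(R−1)/((N^mid_1 − 1)·(N^mid_1)²·(N^low_1 − 1)²). -/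

import Mathlib

open Finset

attribute [local instance] Classical.propDecidable

noncomputable section

/-- A finite pure weighted graded poset of rank `d`, presented as a rank function
and a weight scheme on a finite partial order `P`. -/
structure WGP (P : Type) [Fintype P] [PartialOrder P] where
  /-- the rank of the poset -/
  d : ℤ
  /-- the rank function -/
  rk : P → ℤ
  rk_mono : Monotone rk
  rk_lb : ∀ x, -1 ≤ rk x
  rk_ub : ∀ x, rk x ≤ d
  rk_covBy : ∀ a b : P, a ⋖ b → rk b = rk a + 1
  bot_unique : ∃! x : P, rk x = -1
  isPure : ∀ x : P, ∃ y : P, rk y = d ∧ x ≤ y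
  /-- the weight function -/
  m : P → ℝ
  m_pos : ∀ x, 0 < m x
  /-- the transition probabilities: `p y x` is `p_{y → x}` -/
  p : P → P → ℝ
  p_nonneg : ∀ y x, 0 ≤ p y x
  p_pos_iff : ∀ y x, 0 < p y x ↔ x ⋖ y
  p_sum : ∀ y, 0 ≤ rk y → ∑ x ∈ univ.filter (fun x => x ⋖ y), p y x = 1
  m_eq : ∀ x, rk x < d → m x = ∑ y ∈ univ.filter (fun y => x ⋖ y), p y x * m y
  m_bot : ∀ x, rk x = -1 → m x = 1

/-- `T` has at most `n` eigenvalues greater than `c`, counted with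
(geometric) multiplicity. -/
def eigMultAboveLe {V : Type*} [AddCommGroup V] [Module ℝ V]
    (T : Module.End ℝ V) (c : ℝ) (n : ℕ) : Prop :=
  ∀ s : Finset ℝ, (∀ μ ∈ s, c < μ) →
    ∑ μ ∈ s, Module.finrank ℝ (T.eigenspace μ) ≤ n

/-- `μ` is the second largest eigenvalue of `T`, counted with multiplicity. -/
def IsSecondLargestEig {V : Type*} [AddCommGroup V] [Module ℝ V]
    (T : Module.End ℝ V) (μ : ℝ) : Prop :=
  T.HasEigenvalue μ ∧ eigMultAboveLe T μ 1 ∧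
    ∃ s : Finset ℝ, (∀ ν ∈ s, μ ≤ ν) ∧
      2 ≤ ∑ ν ∈ s, Module.finrank ℝ (T.eigenspace ν)

/-- `ν` is the least eigenvalue of `T`. -/
def IsLeastEig {V : Type*} [AddCommGroup V] [Module ℝ V]
    (T : Module.End ℝ V) (ν : ℝ) : Prop :=
  T.HasEigenvalue ν ∧ ∀ c : ℝ, T.HasEigenvalue c → ν ≤ c

/-- `λ(T) ≤ lam`, i.e. the second largest eigenvalue of `T` (with multiplicity)
is at most `lam` and the least eigenvalue is at least `-lam`. -/
def lamBd {V : Type*} [AddCommGroup V] [Module ℝ V]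
    (T : Module.End ℝ V) (lam : ℝ) : Prop :=
  eigMultAboveLe T lam 1 ∧ ∀ c : ℝ, T.HasEigenvalue c → -lam ≤ c

namespace WGP

variable {P : Type} [Fintype P] [PartialOrder P] (W : WGP P)

/-- The level set `P(i)`. -/
def lvl (i : ℤ) : Finset P := univ.filter (fun x => W.rk x = i)

/-- The weighted inner product on `C^i`. -/
def innerAt (i : ℤ) (f g : P → ℝ) : ℝ := ∑ x ∈ W.lvl i, W.m x * f x * g x

/-- The squared norm on `C^i`. -/
def normSqAt (i : ℤ) (f : P → ℝ) : ℝ := W.innerAt i f f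

/-- The norm on `C^i`. -/
def normAt (i : ℤ) (f : P → ℝ) : ℝ := Real.sqrt (W.normSqAt i f)

/-- The matrix of transition probabilities : entry `(y, x)` is `p_{y→x}`,
which vanishes unless `x ⋖ y`.  This is also the matrix of the up operator. -/
def upMat : Matrix P P ℝ := Matrix.of fun y x => W.p y x

/-- The matrix of the down operator. -/
def downMat : Matrix P P ℝ := Matrix.of fun x y => W.p y x * W.m y / W.m x

/-- The up operator `U`. -/
def Up (f : P → ℝ) : P → ℝ := W.upMat.mulVec f

/-- The down operator `D`. -/
def Down (f : P → ℝ) : P → ℝ := W.downMat.mulVec f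

/-- `chSum x y = Σ_{c ∈ Ch(y→x)} p(c)`, the total `p`-weight of maximal chains
from `x` up to `y` (the entry of the corresponding power of the transition
matrix). -/
def chSum (x y : P) : ℝ := (W.upMat ^ (W.rk y - W.rk x).toNat) y x

/-- The induced weight function of the link `P_x`. -/
def mL (x y : P) : ℝ := W.m y / W.m x * W.chSum x y

/-- The induced transition probabilities of the link `P_x` :
`pL x z y = (p_x)_{z → y}`. -/
def pL (x z y : P) : ℝ := W.p z y * W.chSum x y / W.chSum x z

/-- The level set `P_x(j)` of the link of `x`. -/
def linkLvl (x : P) (j : ℤ) : Finset P :=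
  univ.filter (fun y => x ≤ y ∧ W.rk y = W.rk x + 1 + j)

/-- The inner product of the link `P_x` at link-level `j`. -/
def innerL (x : P) (j : ℤ) (f g : P → ℝ) : ℝ :=
  ∑ y ∈ W.linkLvl x j, W.mL x y * f y * g y

/-- The matrix of the up operator of the link `P_x`. -/
def upMatL (x : P) : Matrix P P ℝ :=
  Matrix.of fun z y => if y ⋖ z ∧ x ≤ y then W.pL x z y else 0

/-- The matrix of the down operator of the link `P_x`. -/
def downMatL (x : P) : Matrix P P ℝ :=
  Matrix.of fun y z => if y ⋖ z then W.pL x z y * W.mL x z / W.mL x y else 0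

/-- The up operator of the link `P_x`. -/
def UpL (x : P) (f : P → ℝ) : P → ℝ := (W.upMatL x).mulVec f

/-- The down operator of the link `P_x`. -/
def DownL (x : P) (f : P → ℝ) : P → ℝ := (W.downMatL x).mulVec f

/-- The up-down walk `M^+_{x,0}` of the link `P_x`. -/
def MplusL (x : P) (f : P → ℝ) : P → ℝ := W.DownL x (W.UpL x f)

/-- The down-up walk `M^-_{x,0}` of the link `P_x`. -/
def MminusL (x : P) (f : P → ℝ) : P → ℝ := W.UpL x (W.DownL x f)

/-- The adjacency matrix. -/
def adjMat : Matrix P P ℝ := Matrix.of fun y x =>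
  if x = y then 0 else
    ∑ z ∈ univ.filter (fun z => x ⋖ z ∧ y ⋖ z),
      W.m z * W.p z x * W.p z y / ((1 - W.p z y) * W.m y)

/-- The adjacency operator. -/
def Adj (f : P → ℝ) : P → ℝ := W.adjMat.mulVec f

/-- The adjacency matrix of the link `P_x`. -/
def adjMatL (x : P) : Matrix P P ℝ := Matrix.of fun y w =>
  if w = y then 0 else
    ∑ z ∈ univ.filter (fun z => w ⋖ z ∧ y ⋖ z),
      W.mL x z * W.pL x z w * W.pL x z y / ((1 - W.pL x z y) * W.mL x y)

/-- The adjacency operator of the link `P_x`. -/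
def AdjL (x : P) (f : P → ℝ) : P → ℝ := (W.adjMatL x).mulVec f

/-- The up-down walk `M^+_l` as an endomorphism of `C^l`. -/
def MplusEnd (l : ℤ) : Module.End ℝ ({x : P // W.rk x = l} → ℝ) :=
  ((W.downMat * W.upMat).submatrix Subtype.val Subtype.val).mulVecLin

/-- The up-down walk `M^+_{x,0}` as an endomorphism of `C^0(P_x)`. -/
def MplusEndL (x : P) : Module.End ℝ ({y : P // x ⋖ y} → ℝ) :=
  ((W.downMatL x * W.upMatL x).submatrix Subtype.val Subtype.val).mulVecLin

/-- The adjacency operator `A_x` of the link `P_x` as an endomorphism of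
`C^0(P_x)`. -/
def AdjEndL (x : P) : Module.End ℝ ({y : P // x ⋖ y} → ℝ) :=
  ((W.adjMatL x).submatrix Subtype.val Subtype.val).mulVecLin

/-- A standard weight scheme. -/
def Standard : Prop :=
  ∀ y x : P, x ⋖ y → W.p y x = 1 / ((univ.filter (fun z => z ⋖ y)).card : ℝ)

/-- `P` is lower regular at level `i` with constant `N`. -/
def LowerRegAt (i : ℤ) (N : ℕ) : Prop :=
  ∀ y : P, W.rk y = i → (univ.filter (fun z => z ⋖ y)).card = N

/-- `P` is middle regular at level `i` with constant `N`. -/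
def MiddleRegAt (i : ℤ) (N : ℕ) : Prop :=
  ∀ x z : P, W.rk x = i + 1 → W.rk z = i - 1 → z < x →
    (univ.filter (fun y => z ⋖ y ∧ y ⋖ x)).card = N

/-- `P` is `∨∧`-regular at level `i` with constant `N`. -/
def WedgeRegAt (i : ℤ) (N : ℕ) : Prop :=
  ∀ y₁ y₂ : P, W.rk y₁ = i → W.rk y₂ = i → y₁ ≠ y₂ → (∃ z, y₁ ⋖ z ∧ y₂ ⋖ z) →
    (univ.filter (fun s => s ⋖ y₁ ∧ s ⋖ y₂)).card = N

/-- `P` is `⅄`-regular with constant `R`. -/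
def WyeReg (R : ℕ) : Prop :=
  ∀ u y₁ y₂ : P, W.rk u = 2 → W.rk y₁ = 0 → W.rk y₂ = 0 → y₁ ≠ y₂ →
    y₁ < u → y₂ < u →
    (univ.filter (fun z => y₁ ⋖ z ∧ y₂ ⋖ z ∧ z ⋖ u)).card = R

/-- Property UL.1 with constants `c`. -/
def UL1 (c : ℤ → ℝ) : Prop :=
  ∀ l : ℤ, 0 ≤ l → l < W.d → ∀ y : P, W.rk y = l → ∀ x : P, y ⋖ x →
    ∑ z ∈ univ.filter (fun z => z ⋖ y), W.p y z ^ 2 / W.chSum z x = c l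

/-- Property UL.2 with constants `c`. -/
def UL2 (c : ℤ → ℝ) : Prop :=
  ∀ l : ℤ, 0 ≤ l → l < W.d → ∀ y₁ y₂ : P, W.rk y₁ = l → W.rk y₂ = l → y₁ ≠ y₂ →
    ∀ x : P, y₁ ⋖ x → y₂ ⋖ x →
    ∑ z ∈ univ.filter (fun z => z ⋖ y₁ ∧ z ⋖ y₂),
      W.p y₁ z * W.p y₂ z / W.chSum z x = c l

/-- Property UL.3 with constants `c`. -/
def UL3 (c : ℤ → ℝ) : Prop :=
  ∀ l : ℤ, 0 ≤ l → l < W.d → ∀ y : P, W.rk y = l →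
    ∑ x ∈ univ.filter (fun x => y ⋖ x), W.m x * W.p x y ^ 2 = c l * W.m y

/-- Property AL. -/
def AL : Prop :=
  ∀ l : ℤ, 0 ≤ l → l ≤ W.d - 1 → ∀ x y : P, W.rk x = l → W.rk y = l → x ≠ y →
    ∑ z ∈ univ.filter (fun z => x ⋖ z ∧ y ⋖ z),
        W.m z * W.p z x * W.p z y / (1 - W.p z x)
    = ∑ z ∈ univ.filter (fun z => x ⋖ z ∧ y ⋖ z),
        W.m z * W.p z x * W.p z y *
          ∑ s ∈ univ.filter (fun s => s ⋖ x ∧ s ⋖ y),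
            W.p x s * W.p y s / (W.chSum s z - W.p z x * W.p x s)

/-- Equation TL.1 with constant `c`. -/
def TL1 (c : ℝ) : Prop :=
  ∀ y : P, W.rk y = 0 →
    c * W.m y = ∑ z ∈ univ.filter (fun z => y ⋖ z), W.m z * W.p z y ^ 2 *
      ∑ x ∈ univ.filter (fun x => x ⋖ z ∧ x ≠ y), W.p z x / (1 - W.p z x) ^ 2

/-- Equation TL.2 with constant `c`. -/
def TL2 (c : ℝ) : Prop :=
  ∀ y₁ y₂ : P, W.rk y₁ = 0 → W.rk y₂ = 0 → y₁ ≠ y₂ →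
    c * ∑ z ∈ univ.filter (fun z => y₁ ⋖ z ∧ y₂ ⋖ z),
          W.m z * W.p z y₁ * W.p z y₂ / (1 - W.p z y₁)
    = ∑ z ∈ univ.filter (fun z => y₁ ⋖ z ∧ y₂ ⋖ z),
        W.m z * W.p z y₁ * W.p z y₂ *
          ∑ x ∈ univ.filter (fun x => x ⋖ z ∧ x ≠ y₁ ∧ x ≠ y₂),
            W.p z x / (1 - W.p z x) ^ 2

/-- Equation TL.3 with constant `c`. -/
def TL3 (c : ℝ) : Prop :=
  ∀ y : P, W.rk y = 0 →
    c * W.m y =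
      ∑ x ∈ univ.filter (fun x => W.rk x = 0 ∧ x ≠ y),
        ∑ z ∈ univ.filter (fun z => x ⋖ z ∧ y ⋖ z),
          ∑ w ∈ univ.filter (fun w => w ≠ z ∧ x ⋖ w ∧ y ⋖ w),
            ∑ u ∈ univ.filter (fun u => z ⋖ u ∧ w ⋖ u),
              W.m u * W.p u z * W.p u w * W.p w y * W.p z y * W.p w x * W.p z x /
                (W.chSum x u * (1 - W.p u z * W.p z x / W.chSum x u) *
                  (1 - W.p w x) * (1 - W.p z x))

/-- Equation TL.4 with constant `c`. -/
def TL4 (c : ℝ) : Prop :=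
  ∀ y₁ y₂ : P, W.rk y₁ = 0 → W.rk y₂ = 0 → y₁ ≠ y₂ →
    c * ∑ z ∈ univ.filter (fun z => y₁ ⋖ z ∧ y₂ ⋖ z),
          W.m z * W.p z y₁ * W.p z y₂ / (1 - W.p z y₁)
    = ∑ x ∈ univ.filter (fun x => W.rk x = 0 ∧ x ≠ y₁ ∧ x ≠ y₂),
        ∑ z ∈ univ.filter (fun z => x ⋖ z ∧ y₂ ⋖ z),
          ∑ w ∈ univ.filter (fun w => w ≠ z ∧ x ⋖ w ∧ y₁ ⋖ w),
            ∑ u ∈ univ.filter (fun u => z ⋖ u ∧ w ⋖ u),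
              W.m u * W.p u z * W.p u w * W.p w y₁ * W.p z y₂ * W.p w x * W.p z x /
                (W.chSum x u * (1 - W.p u z * W.p z x / W.chSum x u) *
                  (1 - W.p w x) * (1 - W.p z x))

/-- The induced function `f̂_x ∈ C^0(P_x)` of `f ∈ C^0`. -/
def hatF (x : P) (f : P → ℝ) : P → ℝ := fun z =>
  (1 / (1 - W.p z x)) * ∑ y ∈ univ.filter (fun y => y ≠ x ∧ y ⋖ z), W.p z y * f y

/-- `P` is connected: the Markov chain `M^+_0` on `P(0)` is irreducible. -/
def Connected : Prop :=
  ∀ y z : P, W.rk y = 0 → W.rk z = 0 →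
    ∃ j : ℕ, 0 < j ∧ ((W.downMat * W.upMat) ^ j) z y ≠ 0

/-- The link `P_x` is connected: the Markov chain `M^+_{x,0}` on `P_x(0)` is
irreducible. -/
def LinkConnected (x : P) : Prop :=
  ∀ y z : P, x ⋖ y → x ⋖ z →
    ∃ j : ℕ, 0 < j ∧ ((W.downMatL x * W.upMatL x) ^ j) z y ≠ 0

/-- `c` is a nontrivial eigenvalue of the adjacency operator `A` of `P`,
i.e. one with an eigenvector orthogonal to the constants. -/
def IsNontrivEigAdj (c : ℝ) : Prop :=
  ∃ f : P → ℝ, (∃ y, W.rk y = 0 ∧ f y ≠ 0) ∧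
    (∀ y, W.rk y = 0 → W.Adj f y = c * f y) ∧
    W.innerAt 0 f (fun _ => 1) = 0

/-- `c` is a nontrivial eigenvalue of the adjacency operator `A_x` of the
link `P_x`. -/
def IsNontrivEigAdjL (x : P) (c : ℝ) : Prop :=
  ∃ f : P → ℝ, (∃ y, x ⋖ y ∧ f y ≠ 0) ∧
    (∀ y, x ⋖ y → W.AdjL x f y = c * f y) ∧
    W.innerL x 0 f (fun _ => 1) = 0

end WGP


theorem aux_core1 {X Z : Type*} [Fintype X] [Fintype Z]
    (a : Z → X → ℝ) (m0 : X → ℝ) (m1 : Z → ℝ) (N1 lam : ℝ) (f : X → ℝ) (S : Z → ℝ)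
    (hS : ∀ z, S z = ∑ x, a z x * f x)
    (h0 : ∀ x, ∑ z, a z x * m1 z = N1 * m0 x)
    (hE : ∀ x, ∑ z, m1 z * a z x * (S z - f x) = N1 * (N1 - 1) * lam * (m0 x * f x)) :
    (∑ z, m1 z * ∑ x, a z x * f x ^ 2 = N1 * ∑ x, m0 x * f x ^ 2) ∧
    (∑ z, m1 z * S z ^ 2 = N1 * (1 + (N1 - 1) * lam) * ∑ x, m0 x * f x ^ 2) := by
  have h1 : ∑ z, m1 z * ∑ x, a z x * f x ^ 2 = N1 * ∑ x, m0 x * f x ^ 2 := by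
    simp_rw [mul_sum]
    rw [sum_comm]
    refine sum_congr rfl fun x _ => ?_
    rw [← mul_assoc, ← h0, sum_mul]
    exact sum_congr rfl fun z _ => by ring
  refine ⟨h1, ?_⟩
  have h2 : ∑ x, f x * ∑ z, m1 z * a z x * (S z - f x)
      = ∑ z, m1 z * S z ^ 2 - ∑ z, m1 z * ∑ x, a z x * f x ^ 2 := by
    rw [← sum_sub_distrib]
    simp_rw [mul_sum]
    rw [sum_comm]
    refine sum_congr rfl fun z _ => ?_
    have : m1 z * S z ^ 2 = ∑ x, m1 z * S z * (a z x * f x) := by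
      rw [← mul_sum, ← hS]; ring
    rw [this, ← sum_sub_distrib]
    exact sum_congr rfl fun x _ => by ring
  have h3 : ∑ x, f x * ∑ z, m1 z * a z x * (S z - f x)
      = N1 * (N1 - 1) * lam * ∑ x, m0 x * f x ^ 2 := by
    rw [mul_sum]
    exact sum_congr rfl fun x _ => by rw [hE]; ring
  rw [h3, h1] at h2
  linarith

theorem aux_sq {X : Type*} [Fintype X] (a f : X → ℝ) (N T Q : ℝ)
    (h : ∑ x, a x = N) (hT : ∑ x, a x * f x = T) (hQ : ∑ x, a x * f x ^ 2 = Q) :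
    ∑ x, a x * (T - f x) ^ 2 = (N - 2) * T ^ 2 + Q := by
  have : ∀ x, a x * (T - f x) ^ 2 = T ^ 2 * a x - 2 * T * (a x * f x) + a x * f x ^ 2 := by
    intro x; ring
  simp_rw [this]
  rw [sum_add_distrib, sum_sub_distrib, ← mul_sum, ← mul_sum, h, hT, hQ]
  ring

theorem aux_n {X Z : Type*} [Fintype X] [Fintype Z]
    (a : Z → X → ℝ) (m0 : X → ℝ) (m1 : Z → ℝ) (N1 lam : ℝ) (f : X → ℝ) (S : Z → ℝ)
    (hS : ∀ z, S z = ∑ x, a z x * f x)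
    (h0 : ∀ x, ∑ z, a z x * m1 z = N1 * m0 x)
    (h3 : ∀ z, ∑ x, a z x = N1)
    (hE : ∀ x, ∑ z, m1 z * a z x * (S z - f x) = N1 * (N1 - 1) * lam * (m0 x * f x)) :
    ∑ x, ∑ z, m1 z * a z x * (S z - f x) ^ 2
      = N1 * (N1 - 1) * (1 + (N1 - 2) * lam) * ∑ x, m0 x * f x ^ 2 := by
  obtain ⟨e1, e2⟩ := aux_core1 a m0 m1 N1 lam f S hS h0 hE
  rw [sum_comm]
  have : ∀ z, ∑ x, m1 z * a z x * (S z - f x) ^ 2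
      = (N1 - 2) * (m1 z * S z ^ 2) + m1 z * ∑ x, a z x * f x ^ 2 := by
    intro z
    simp_rw [mul_assoc]
    rw [← mul_sum, aux_sq (a z) f N1 (S z) _ (h3 z) (hS z).symm rfl]
    ring
  simp_rw [this]
  rw [sum_add_distrib, ← mul_sum, e1, e2]
  ring

theorem aux_q {X Z U : Type*} [Fintype X] [Fintype Z] [Fintype U]
    (a : Z → X → ℝ) (b : U → Z → ℝ) (e : U → X → ℝ)
    (m0 : X → ℝ) (m1 : Z → ℝ) (m2 : U → ℝ) (N1 N2 M R V lam : ℝ) (f : X → ℝ) (S : Z → ℝ)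
    (ha : ∀ z x, a z x * a z x = a z x)
    (he : ∀ u x, e u x * e u x = e u x)
    (hS : ∀ z, S z = ∑ x, a z x * f x)
    (h0 : ∀ x, ∑ z, a z x * m1 z = N1 * m0 x)
    (h1 : ∀ z, ∑ u, b u z * m2 u = N2 * m1 z)
    (h3 : ∀ z, ∑ x, a z x = N1)
    (h5 : ∀ u x, ∑ z, b u z * a z x = M * e u x)
    (h6 : ∀ u x y, x ≠ y → ∑ z, b u z * (a z x * a z y) = R * (e u x * e u y))
    (hV : ∀ u, ∑ x, e u x = V) (hV1 : V * M = N1 * N2) (hV2 : (V - 1) * R = M * (N1 - 1))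
    (hM : M ≠ 0)
    (hE : ∀ x, ∑ z, m1 z * a z x * (S z - f x) = N1 * (N1 - 1) * lam * (m0 x * f x)) :
    ∑ x, ∑ u, m2 u * ((∑ z, b u z * (a z x * (S z - f x))) ^ 2
        - ∑ z, b u z * (a z x * (S z - f x) ^ 2))
      = N1 * N2 * (N1 - 1) * ((M - 1) * (N1 - 1) * lam + (R - 1) * (1 - lam))
          * ∑ x, m0 x * f x ^ 2 := by
  obtain ⟨e1, e2⟩ := aux_core1 a m0 m1 N1 lam f S hS h0 hE
  have hn := aux_n a m0 m1 N1 lam f S hS h0 h3 hE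
  set F := ∑ x, m0 x * f x ^ 2 with hF
  set T : U → ℝ := fun u => ∑ x, e u x * f x with hT
  set Q : U → ℝ := fun u => ∑ x, e u x * f x ^ 2 with hQ
  -- transfer from level 2 to level 1
  have tr : ∀ φ : Z → ℝ, ∑ u, m2 u * ∑ z, b u z * φ z = N2 * ∑ z, m1 z * φ z := by
    intro φ
    simp_rw [mul_sum]
    rw [sum_comm]
    refine sum_congr rfl fun z _ => ?_
    rw [← mul_assoc, ← h1, sum_mul]
    exact sum_congr rfl fun u _ => by ring
  have hQs : M * ∑ u, m2 u * Q u = N2 * N1 * F := by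
    have : ∀ u, M * Q u = ∑ z, b u z * ∑ x, a z x * f x ^ 2 := by
      intro u
      simp only [hQ]
      simp_rw [mul_sum]
      rw [sum_comm]
      refine sum_congr rfl fun x _ => ?_
      rw [← mul_assoc, ← h5, sum_mul]
      exact sum_congr rfl fun z _ => by ring
    rw [mul_assoc, ← e1, ← tr, mul_sum]
    exact sum_congr rfl fun u _ => by rw [← this]; ring
  -- the key one-point identity
  have key : ∀ u x, ∑ z, b u z * (a z x * (S z - f x)) = R * (e u x * (T u - f x)) := by
    intro u x
    have l1 : ∀ z, a z x * (S z - f x) = ∑ y ∈ univ.erase x, a z x * a z y * f y := by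
      intro z
      have : S z = a z x * f x + ∑ y ∈ univ.erase x, a z y * f y := by
        rw [hS, add_sum_erase _ (fun y => a z y * f y) (mem_univ x)]
      rw [this]
      have : a z x * (a z x * f x + ∑ y ∈ univ.erase x, a z y * f y - f x)
        = (a z x * a z x - a z x) * f x + a z x * ∑ y ∈ univ.erase x, a z y * f y := by ring
      rw [this, ha, mul_sum]
      simp [mul_assoc]
    have l2 : e u x * (T u - f x) = ∑ y ∈ univ.erase x, e u x * e u y * f y := by
      have : T u = e u x * f x + ∑ y ∈ univ.erase x, e u y * f y := by
        simp only [hT]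
        rw [add_sum_erase _ (fun y => e u y * f y) (mem_univ x)]
      rw [this]
      have : e u x * (e u x * f x + ∑ y ∈ univ.erase x, e u y * f y - f x)
        = (e u x * e u x - e u x) * f x + e u x * ∑ y ∈ univ.erase x, e u y * f y := by ring
      rw [this, he, mul_sum]
      simp [mul_assoc]
    rw [l2]
    simp_rw [l1, mul_sum]
    rw [sum_comm]
    refine sum_congr rfl fun y hy => ?_
    have hxy : x ≠ y := (ne_of_mem_erase hy).symm
    rw [← mul_assoc, ← h6 u x y hxy, sum_mul]
    exact sum_congr rfl fun z _ => by ring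
  have hTs : R * ∑ u, m2 u * T u ^ 2 = R * ∑ u, m2 u * Q u + N2 * (N1 * (N1 - 1) * lam * F) := by
    have k1 : ∀ u, R * T u ^ 2 - R * Q u = ∑ z, b u z * (S z ^ 2 - ∑ x, a z x * f x ^ 2) := by
      intro u
      have : ∑ x, f x * (R * (e u x * (T u - f x))) = R * T u ^ 2 - R * Q u := by
        have : R * T u ^ 2 = ∑ x, R * T u * (e u x * f x) := by
          rw [← mul_sum]; simp only [hT]; ring
        have hQ' : R * Q u = ∑ x, R * (e u x * f x ^ 2) := by rw [← mul_sum]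
        rw [this, hQ', ← sum_sub_distrib]
        exact sum_congr rfl fun x _ => by ring
      rw [← this]
      simp_rw [← key, mul_sum]
      rw [sum_comm]
      refine sum_congr rfl fun z _ => ?_
      have : S z ^ 2 = ∑ x, S z * (a z x * f x) := by rw [← mul_sum, ← hS]; ring
      rw [this, ← sum_sub_distrib, mul_sum]
      exact sum_congr rfl fun x _ => by ring
    have k2 : ∑ u, m2 u * (R * T u ^ 2 - R * Q u) = N2 * (N1 * (N1 - 1) * lam * F) := by
      simp_rw [k1]
      rw [tr]
      simp_rw [mul_sub]
      rw [sum_sub_distrib, e1, e2]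
      ring
    have k3 : ∑ u, m2 u * (R * T u ^ 2 - R * Q u)
        = R * ∑ u, m2 u * T u ^ 2 - R * ∑ u, m2 u * Q u := by
      rw [mul_sum, mul_sum, ← sum_sub_distrib]
      exact sum_congr rfl fun u _ => by ring
    linarith
  -- assemble
  rw [sum_comm]
  have as : ∀ u, ∑ x, m2 u * ((∑ z, b u z * (a z x * (S z - f x))) ^ 2
        - ∑ z, b u z * (a z x * (S z - f x) ^ 2))
      = R ^ 2 * (V - 2) * (m2 u * T u ^ 2) + R ^ 2 * (m2 u * Q u)
        - m2 u * ∑ z, b u z * ∑ x, a z x * (S z - f x) ^ 2 := by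
    intro u
    rw [← mul_sum, sum_sub_distrib]
    have c1 : ∑ x, (∑ z, b u z * (a z x * (S z - f x))) ^ 2
        = R ^ 2 * ((V - 2) * T u ^ 2 + Q u) := by
      rw [← aux_sq (e u) f V (T u) (Q u) (hV u) rfl rfl, mul_sum]
      refine sum_congr rfl fun x _ => ?_
      rw [key]
      have := he u x
      linear_combination R ^ 2 * (T u - f x) ^ 2 * this
    have c2 : ∑ x, ∑ z, b u z * (a z x * (S z - f x) ^ 2)
        = ∑ z, b u z * ∑ x, a z x * (S z - f x) ^ 2 := by
      rw [sum_comm]; simp_rw [mul_sum]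
    rw [c1, c2]; ring
  simp_rw [as]
  rw [sum_sub_distrib, sum_add_distrib, ← mul_sum, ← mul_sum, tr]
  have hn' : ∑ z, m1 z * ∑ x, a z x * (S z - f x) ^ 2
      = N1 * (N1 - 1) * (1 + (N1 - 2) * lam) * F := by
    rw [← hn, sum_comm]
    simp_rw [mul_sum, mul_assoc]
  rw [hn']
  set Qs := ∑ u, m2 u * Q u
  set Ts := ∑ u, m2 u * T u ^ 2
  have hQV : Qs = V * F := by
    have : M * (Qs - V * F) = 0 := by linear_combination hQs - F * hV1
    have := (mul_eq_zero.mp this).resolve_left hM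
    linarith
  have hk : R ^ 2 * (V - 2) * Ts + R ^ 2 * Qs
      = R * (V-2) * (R * V * F + N2 * (N1 * (N1 - 1) * lam * F)) + R ^ 2 * (V * F) := by
    rw [hQV] at hTs ⊢
    linear_combination R * (V - 2) * hTs
  rw [hk]
  have : N1 * N2 = V * M := hV1.symm
  -- R(V-1) = M (N1-1)
  linear_combination (F * R * V + N1 * N2 * (N1-1)*lam*F ) * hV2 + R * F * (N1 - 1) * hV1

theorem aux_spec {Z : Type*} [Fintype Z] (w : Z → ℝ) (hw : ∀ z, 0 < w z) (L : Z → Z → ℝ)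
    (hL : ∀ z z', L z z' = L z' z) (τ t : ℝ) (hrow : ∀ z, ∑ z', L z z' = τ * w z)
    (hw1 : ∑ z, w z = 1)
    (hyp : ∀ (c : ℝ) (h : Z → ℝ), h ≠ 0 → (∀ z, ∑ z', L z z' * h z' = c * (w z * h z)) →
      ∑ z, w z * h z = 0 → c ≤ t) (g : Z → ℝ) :
    ∑ z, ∑ z', L z z' * g z * g z' ≤ t * ∑ z, w z * g z ^ 2 + (τ - t) * (∑ z, w z * g z) ^ 2 := by
  set s : Z → ℝ := fun z => Real.sqrt (w z) with hs
  have s0 : ∀ z, s z ≠ 0 := fun z => (Real.sqrt_pos.mpr (hw z)).ne'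
  have ss : ∀ z, s z * s z = w z := fun z => Real.mul_self_sqrt (hw z).le
  set K : Matrix Z Z ℝ := Matrix.of fun z z' =>
    (if z = z' then t else 0) - L z z' / (s z * s z') + (τ - t) * (s z * s z') with hK
  have Kmul : ∀ (h : Z → ℝ) z, K.mulVec (fun z => s z * h z) z
      = t * (s z * h z) - (∑ z', L z z' * h z') / s z + (τ - t) * s z * ∑ z', w z' * h z' := by
    intro h z
    simp only [Matrix.mulVec, dotProduct, hK, Matrix.of_apply]
    have : ∀ z', ((if z = z' then t else 0) - L z z' / (s z * s z') + (τ - t) * (s z * s z'))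
        * (s z' * h z') = (if z = z' then t * (s z' * h z') else 0) - L z z' * h z' / s z
          + (τ - t) * s z * (w z' * h z') := by
      intro z'
      rw [← ss z']
      have := s0 z
      have := s0 z'
      split_ifs <;> field_simp <;> ring
    simp_rw [this]
    rw [sum_add_distrib, sum_sub_distrib, ← mul_sum, sum_div]
    simp
  have Kh : K.IsHermitian := by
    ext z z'
    simp only [hK, Matrix.conjTranspose_apply, Matrix.of_apply, star_trivial]
    rw [hL z' z, mul_comm (s z') (s z)]
    simp [eq_comm]
  have Kpsd : K.PosSemidef := by
    rw [Kh.posSemidef_iff_eigenvalues_nonneg]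
    intro i
    have hv := Kh.mulVec_eigenvectorBasis i
    set c := Kh.eigenvalues i
    set v : Z → ℝ := WithLp.ofLp (Kh.eigenvectorBasis i) with hvd
    have hv0 : v ≠ 0 := by
      intro h0
      have : Kh.eigenvectorBasis i = 0 := by
        ext j; exact congrFun h0 j
      have h1 := Kh.eigenvectorBasis.orthonormal.1 i
      rw [this] at h1
      simp at h1
    set h : Z → ℝ := fun z => v z / s z with hh
    have hvh : v = fun z => s z * h z := by
      ext z; simp only [hh]; field_simp [s0 z]
    have hz : ∀ z, t * (s z * h z) - (∑ z', L z z' * h z') / s z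
        + (τ - t) * s z * ∑ z', w z' * h z' = c * (s z * h z) := by
      intro z
      rw [← Kmul, ← hvh, hv]
      simp [hvh]
    have hz' : ∀ z, ∑ z', L z z' * h z' = (t - c) * (w z * h z)
        + (τ - t) * w z * ∑ z', w z' * h z' := by
      intro z
      have := hz z
      rw [← ss z]
      have h2 := s0 z
      field_simp at this
      linear_combination -this
    have hsum : ∑ z, ∑ z', L z z' * h z' = τ * ∑ z, w z * h z := by
      rw [sum_comm, mul_sum]
      refine sum_congr rfl fun z' _ => ?_
      rw [← sum_mul]
      simp_rw [fun x => hL x z']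
      rw [hrow]; ring
    have hc : c * ∑ z, w z * h z = 0 := by
      have h2 : ∑ z, ∑ z', L z z' * h z' = (t - c) * (∑ z, w z * h z)
        + (τ - t) * ∑ z', w z' * h z' := by
        simp_rw [hz']
        rw [sum_add_distrib, ← mul_sum]
        congr 1
        rw [← sum_mul, ← mul_sum, hw1, mul_one]
      linear_combination h2 - hsum
    show (0:ℝ) ≤ c
    rcases mul_eq_zero.mp hc with h0 | h0
    · exact h0.ge
    · have hne : h ≠ 0 := by
        intro hh0; apply hv0; rw [hvh, hh0]; ext z; simp
      have := hyp (t - c) h hne (fun z => by rw [hz', h0]; ring) h0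
      linarith
  have := Kpsd.dotProduct_mulVec_nonneg (fun z => s z * g z)
  simp only [star_trivial] at this
  rw [dotProduct] at this
  simp_rw [Kmul] at this
  have e1 : ∀ z, s z * g z * (t * (s z * g z) - (∑ z', L z z' * g z') / s z
      + (τ - t) * s z * ∑ z', w z' * g z') = t * (w z * g z ^ 2) - ∑ z', L z z' * g z * g z'
      + (τ - t) * (∑ z', w z' * g z') * (w z * g z) := by
    intro z
    have h2 := s0 z
    have : ∑ z', L z z' * g z * g z' = g z * ∑ z', L z z' * g z' := by
      rw [mul_sum]; exact sum_congr rfl fun _ _ => by ring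
    rw [this, ← ss z]
    field_simp
  simp_rw [e1] at this
  rw [sum_add_distrib, sum_sub_distrib, ← mul_sum, ← mul_sum] at this
  nlinarith [this]

namespace WGP
section aux
variable {P : Type} [Fintype P] [PartialOrder P] (W : WGP P)

def cv (z x : P) : ℝ := if x ⋖ z then 1 else 0

theorem sum_sub (p : P → Prop) [Fintype {x // p x}] (φ : P → ℝ) (h : ∀ x, φ x ≠ 0 → p x) :
    ∑ x, φ x = ∑ x : {x // p x}, φ x.1 := by
  rw [← Finset.sum_subtype (univ.filter p) (by simp) φ]
  rw [Finset.sum_filter_of_ne]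
  exact fun x _ hx => h x hx

theorem p_eq_zero {y x : P} (h : ¬ x ⋖ y) : W.p y x = 0 := by
  by_contra hne
  exact h ((W.p_pos_iff y x).mp (lt_of_le_of_ne (W.p_nonneg y x) (Ne.symm hne)))

theorem p_std (hstd : W.Standard) {i : ℤ} {N : ℕ} (hl : W.LowerRegAt i N) {z : P}
    (hz : W.rk z = i) (x : P) : W.p z x = cv z x / N := by
  unfold cv
  split_ifs with h
  · rw [hstd z x h, hl z hz]
  · rw [W.p_eq_zero h]; simp

theorem cv_ne {z x : P} (h : cv z x ≠ 0) : x ⋖ z := by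
  unfold cv at h; split_ifs at h with h1
  · exact h1
  · exact absurd rfl h

theorem cv_one {z x : P} (h : x ⋖ z) : cv z x = 1 := by simp [cv, h]

theorem cv_sq (z x : P) : cv z x * cv z x = cv z x := by unfold cv; split_ifs <;> simp

theorem sum_cv_low {i : ℤ} {N : ℕ} (hl : W.LowerRegAt i N) {z : P}
    (hz : W.rk z = i) : ∑ x, cv z x = N := by
  rw [← hl z hz]; simp [cv]

theorem sum_cv_up (hstd : W.Standard) {i : ℤ} {N : ℕ} (hl : W.LowerRegAt (i+1) N) (hN : (N : ℝ) ≠ 0)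
    (hi : i < W.d) {x : P} (hx : W.rk x = i) :
    ∑ z, cv z x * W.m z = N * W.m x := by
  rw [W.m_eq x (hx ▸ hi), mul_sum, sum_filter]
  refine sum_congr rfl fun z _ => ?_
  split_ifs with h
  · rw [W.p_std hstd hl (by rw [W.rk_covBy _ _ h, hx]), cv_one h]; field_simp
  · simp [cv, h]

theorem exists_cover {x : P} (hx : W.rk x < W.d) : ∃ z, x ⋖ z := by
  by_contra! h
  have := W.m_eq x hx
  rw [filter_false_of_mem (by simpa using h)] at this
  have := W.m_pos x
  simp_all

theorem mid_cv {M : ℕ} (hm : W.MiddleRegAt 1 M) {u x : P} (hu : W.rk u = 2) (hx : W.rk x = 0) :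
    ∑ z, cv u z * cv z x = M * (if x < u then 1 else 0) := by
  split_ifs with h
  · rw [← hm u x (by simp [hu]) (by simp [hx]) h]
    simp [cv, ← ite_and, and_comm]
  · rw [mul_zero]
    refine sum_eq_zero fun z _ => ?_
    by_contra hne
    exact h ((cv_ne (right_ne_zero_of_mul hne)).lt.trans (cv_ne (left_ne_zero_of_mul hne)).lt)

theorem wye_cv {R : ℕ} (hw : W.WyeReg R) {u x y : P} (hu : W.rk u = 2) (hx : W.rk x = 0)
    (hy : W.rk y = 0) (hxy : x ≠ y) :
    ∑ z, cv u z * (cv z x * cv z y)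
      = R * ((if x < u then 1 else 0) * (if y < u then 1 else 0)) := by
  by_cases h : x < u ∧ y < u
  · rw [if_pos h.1, if_pos h.2, ← hw u x y hu hx hy hxy h.1 h.2, card_filter]
    push_cast
    rw [mul_one, mul_one]
    refine sum_congr rfl fun z _ => ?_
    unfold cv
    by_cases h1 : x ⋖ z <;> by_cases h2 : y ⋖ z <;> by_cases h3 : z ⋖ u <;> simp [h1, h2, h3]
  · have : ((if x < u then (1:ℝ) else 0) * (if y < u then 1 else 0)) = 0 := by
      by_cases h1 : x < u
      · have h2 : ¬ y < u := fun h2 => h ⟨h1, h2⟩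
        simp [h2]
      · simp [h1]
    rw [this, mul_zero]
    refine sum_eq_zero fun z _ => ?_
    by_contra hne
    have h3 := cv_ne (left_ne_zero_of_mul hne)
    have h4 := right_ne_zero_of_mul hne
    exact h ⟨(cv_ne (left_ne_zero_of_mul h4)).lt.trans h3.lt,
      (cv_ne (right_ne_zero_of_mul h4)).lt.trans h3.lt⟩

theorem chSum_one {x z : P} (h : W.rk z = W.rk x + 1) : W.chSum x z = W.p z x := by
  unfold chSum
  rw [show (W.rk z - W.rk x).toNat = 1 by rw [h]; simp]
  simp [upMat]

theorem chSum_two {x u : P} (h : W.rk u = W.rk x + 2) :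
    W.chSum x u = ∑ z, W.p u z * W.p z x := by
  unfold chSum
  rw [show (W.rk u - W.rk x).toNat = 2 by rw [h]; simp]
  simp [upMat, pow_two, Matrix.mul_apply]

theorem adj_eq (hstd : W.Standard) {N : ℕ} (hl : W.LowerRegAt 1 N) (hN : 3 ≤ N)
    {x : P} (hx : W.rk x = 0) (f : P → ℝ) :
    (N : ℝ) * (N - 1) * (W.m x * W.Adj f x)
      = ∑ z, W.m z * cv z x * (∑ y, cv z y * f y - f x) := by
  have hN' : (3 : ℝ) ≤ N := by exact_mod_cast hN
  have h1 : (N : ℝ) - 1 ≠ 0 := by linarith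
  have h0 : (N : ℝ) ≠ 0 := by linarith
  have hm := (W.m_pos x).ne'
  have e1 : ∀ y, (N : ℝ) * (N - 1) * W.m x * (W.adjMat x y * f y)
      = ∑ z, W.m z * cv z x * (if y = x then 0 else cv z y * f y) := by
    intro y
    unfold adjMat
    rw [Matrix.of_apply]
    split_ifs with h
    · simp
    · rw [sum_mul, mul_sum, sum_filter]
      refine sum_congr rfl fun z _ => ?_
      split_ifs with hz
      · have hr : W.rk z = 1 := by rw [W.rk_covBy _ _ hz.2, hx]; rfl
        rw [W.p_std hstd hl hr, W.p_std hstd hl hr, cv_one hz.1, cv_one hz.2]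
        have : (1 - 1 / (N : ℝ)) ≠ 0 := by
          rw [one_sub_div h0]; exact div_ne_zero h1 h0
        field_simp
      · by_cases h2 : x ⋖ z
        · have : ¬ y ⋖ z := fun h3 => hz ⟨h3, h2⟩
          simp [cv, this]
        · simp [cv, h2]
  unfold Adj Matrix.mulVec dotProduct
  rw [← mul_assoc, mul_sum]
  simp_rw [e1]
  rw [sum_comm]
  refine sum_congr rfl fun z _ => ?_
  rw [← mul_sum]
  by_cases h2 : x ⋖ z
  · congr 1
    rw [eq_sub_iff_add_eq]
    have : f x = ∑ y, if y = x then f y else 0 := by simp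
    conv_lhs => rw [this]
    rw [← sum_add_distrib]
    refine sum_congr rfl fun y _ => ?_
    split_ifs with h
    · rw [h, cv_one h2]; ring
    · simp
  · simp [cv, h2]

theorem mL_eq (hstd : W.Standard) {N : ℕ} (hl : W.LowerRegAt 1 N)
    {x z : P} (hx : W.rk x = 0) (h : x ⋖ z) : W.mL x z = W.m z / (N * W.m x) := by
  have hr := W.rk_covBy _ _ h
  unfold mL
  rw [W.chSum_one hr, W.p_std hstd hl (by rw [hr, hx]; rfl), cv_one h]
  field_simp

theorem adjL_eq (hstd : W.Standard) {N1 N2 M : ℕ} (hl : W.LowerRegAt 1 N1)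
    (hl2 : W.LowerRegAt 2 N2) (hm1 : W.MiddleRegAt 1 M)
    (hN : 3 ≤ N1) (hM : 2 ≤ M) (hN2 : 0 < N2)
    {x z w : P} (hx : W.rk x = 0) (hz : x ⋖ z) (hw : x ⋖ w) :
    W.m z / (N1 * W.m x) * W.adjMatL x z w = if z = w then 0 else
      ∑ u, cv u z * cv u w * W.m u / (W.m x * N1 * N2 * (M - 1)) := by
  have hN' : (3 : ℝ) ≤ N1 := by exact_mod_cast hN
  have hM' : (2 : ℝ) ≤ M := by exact_mod_cast hM
  have hN2' : (N2 : ℝ) ≠ 0 := by exact_mod_cast hN2.ne'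
  have h1 : (N1 : ℝ) ≠ 0 := by linarith
  have h2 : (M : ℝ) ≠ 0 := by linarith
  have h3 : (M : ℝ) - 1 ≠ 0 := by linarith
  have hm := (W.m_pos x).ne'
  have hmz := (W.m_pos z).ne'
  have hrz : W.rk z = 1 := by rw [W.rk_covBy _ _ hz, hx]; rfl
  have hrw : W.rk w = 1 := by rw [W.rk_covBy _ _ hw, hx]; rfl
  unfold adjMatL
  rw [Matrix.of_apply]
  by_cases h : z = w
  · simp [h]
  rw [if_neg (Ne.symm h), if_neg h, mul_sum, sum_filter]
  refine sum_congr rfl fun u _ => ?_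
  split_ifs with hu
  · have hru : W.rk u = 2 := by rw [W.rk_covBy _ _ hu.1, hrw]; rfl
    have hch : W.chSum x u = M / (N1 * N2) := by
      rw [W.chSum_two (by rw [hru, hx]; rfl)]
      have : ∀ y, W.p u y * W.p y x = cv u y * cv y x / (N1 * N2) := by
        intro y
        by_cases hy : y ⋖ u
        · have hry : W.rk y = 1 := by have := W.rk_covBy _ _ hy; omega
          rw [W.p_std hstd hl2 hru, W.p_std hstd hl hry]
          field_simp
        · rw [W.p_eq_zero hy]; simp [cv, hy]
      simp_rw [this]
      rw [← sum_div, W.mid_cv hm1 hru hx, if_pos (hw.lt.trans hu.1.lt), mul_one]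
    have hp : ∀ v, x ⋖ v → v ⋖ u → W.pL x u v = 1 / M := by
      intro v hv hvu
      have hrv := W.rk_covBy _ _ hv
      unfold pL
      rw [hch, W.chSum_one hrv, W.p_std hstd hl2 hru, W.p_std hstd hl (by rw [hrv, hx]; rfl),
        cv_one hv, cv_one hvu]
      field_simp
    rw [hp w hw hu.1, hp z hz hu.2, W.mL_eq hstd hl hx hz, cv_one hu.1, cv_one hu.2]
    unfold mL
    rw [hch]
    have : (1 - 1 / (M : ℝ)) ≠ 0 := by rw [one_sub_div h2]; exact div_ne_zero h3 h2
    field_simp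
  · by_cases h2 : z ⋖ u
    · have : ¬ w ⋖ u := fun h3 => hu ⟨h3, h2⟩
      simp [cv, this]
    · simp [cv, h2]

/-- The quadratic form of the link adjacency operator. -/
theorem link_form (N1 N2 M : ℝ) (x : P) (g : P → ℝ) :
    ∑ z : {z // x ⋖ z}, ∑ w : {z // x ⋖ z}, (if z = w then 0 else
      ∑ u, cv u z.1 * cv u w.1 * W.m u / (W.m x * N1 * N2 * (M - 1))) * g z * g w
    = (∑ u, W.m u * ((∑ z, cv u z * (cv z x * g z)) ^ 2
        - ∑ z, cv u z * (cv z x * g z ^ 2))) / (W.m x * N1 * N2 * (M - 1)) := by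
  set K := W.m x * N1 * N2 * (M - 1)
  have e1 : ∀ u, ∑ z, cv u z * (cv z x * g z) = ∑ z : {z // x ⋖ z}, cv u z.1 * g z.1 := by
    intro u
    rw [sum_sub (fun z => x ⋖ z)]
    · exact sum_congr rfl fun z _ => by rw [cv_one z.2, one_mul]
    · exact fun z hz => cv_ne (left_ne_zero_of_mul (right_ne_zero_of_mul hz))
  have e2 : ∀ u, ∑ z, cv u z * (cv z x * g z ^ 2)
      = ∑ z : {z // x ⋖ z}, (cv u z.1 * g z.1) * (cv u z.1 * g z.1) := by
    intro u
    rw [sum_sub (fun z => x ⋖ z)]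
    · refine sum_congr rfl fun z _ => ?_
      rw [cv_one z.2]
      linear_combination -(g z.1 ^ 2) * cv_sq u z.1
    · exact fun z hz => cv_ne (left_ne_zero_of_mul (right_ne_zero_of_mul hz))
  have e3 : ∀ u, (∑ z : {z // x ⋖ z}, cv u z.1 * g z.1) ^ 2
        - ∑ z : {z // x ⋖ z}, (cv u z.1 * g z.1) * (cv u z.1 * g z.1)
      = ∑ z : {z // x ⋖ z}, ∑ w : {z // x ⋖ z},
        if z = w then 0 else (cv u z.1 * g z.1) * (cv u w.1 * g w.1) := by
    intro u
    rw [pow_two, sum_mul_sum, ← sum_sub_distrib]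
    refine sum_congr rfl fun z _ => ?_
    have : cv u z.1 * g z.1 * (cv u z.1 * g z.1)
      = ∑ w : {z // x ⋖ z}, if z = w then cv u z.1 * g z.1 * (cv u w.1 * g w.1) else 0 := by simp
    rw [this, ← sum_sub_distrib]
    refine sum_congr rfl fun w _ => ?_
    split_ifs <;> simp
  simp_rw [e1, e2, e3, mul_sum, sum_div]
  symm
  rw [sum_comm]
  refine sum_congr rfl fun z _ => ?_
  rw [sum_comm]
  refine sum_congr rfl fun w _ => ?_
  split_ifs with h
  · simp
  · rw [sum_mul, sum_mul]
    exact sum_congr rfl fun u _ => by ring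

theorem link_bound (hd : 2 ≤ W.d) (hstd : W.Standard) {N1 N2 M : ℕ} (hl : W.LowerRegAt 1 N1)
    (hl2 : W.LowerRegAt 2 N2) (hm1 : W.MiddleRegAt 1 M)
    (hN : 3 ≤ N1) (hM : 2 ≤ M) (hN2 : 0 < N2)
    {x : P} (hx : W.rk x = 0) (σ t : ℝ)
    (hyp : ∀ c, W.IsNontrivEigAdjL x c → σ * c ≤ t) (hσ : σ * σ = 1) (g : P → ℝ) :
    σ * ((∑ u, W.m u * ((∑ z, cv u z * (cv z x * g z)) ^ 2
        - ∑ z, cv u z * (cv z x * g z ^ 2))) / (W.m x * N1 * N2 * (M - 1)))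
    ≤ t * ((∑ z, W.m z * cv z x * g z ^ 2) / (N1 * W.m x))
      + (σ - t) * ((∑ z, W.m z * cv z x * g z) / (N1 * W.m x)) ^ 2 := by
  have hN' : (3 : ℝ) ≤ N1 := by exact_mod_cast hN
  have hM' : (2 : ℝ) ≤ M := by exact_mod_cast hM
  have hN2' : (N2 : ℝ) ≠ 0 := by exact_mod_cast hN2.ne'
  have h1 : (0 : ℝ) < N1 := by linarith
  have h3 : (M : ℝ) - 1 ≠ 0 := by linarith
  have hm := W.m_pos x
  rw [← W.link_form (N1 : ℝ) N2 M x g]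
  set L : {z // x ⋖ z} → {z // x ⋖ z} → ℝ := fun z w => if z = w then 0 else
      ∑ u, cv u z.1 * cv u w.1 * W.m u / (W.m x * N1 * N2 * (M - 1)) with hL
  set wt : {z // x ⋖ z} → ℝ := fun z => W.m z.1 / (N1 * W.m x) with hwt
  have conv : ∀ φ : P → ℝ, (∑ z, W.m z * cv z x * φ z) / (N1 * W.m x)
      = ∑ z : {z // x ⋖ z}, wt z * φ z.1 := by
    intro φ
    rw [sum_sub (fun z => x ⋖ z), sum_div]
    · exact sum_congr rfl fun z _ => by rw [cv_one z.2, mul_one, mul_div_right_comm]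
    · exact fun z hz => cv_ne (right_ne_zero_of_mul (left_ne_zero_of_mul hz))
  rw [conv g, conv (fun z => g z ^ 2)]
  have hLA : ∀ z w : {z // x ⋖ z}, wt z * W.adjMatL x z w = L z w := fun z w => by
    rw [hwt, hL]; simp only
    rw [W.adjL_eq hstd hl hl2 hm1 hN hM hN2 hx z.2 w.2]
    simp only [Subtype.ext_iff]
  have hwp : ∀ z, 0 < wt z := fun z => div_pos (W.m_pos _) (by positivity)
  have hsymm : ∀ z w, L z w = L w z := by
    intro z w
    simp only [hL]
    by_cases h : z = w
    · simp [h]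
    · rw [if_neg h, if_neg (Ne.symm h)]
      exact sum_congr rfl fun u _ => by ring
  have hrow : ∀ z, ∑ w, L z w = wt z := by
    intro z
    have hrz : W.rk z.1 = 1 := by rw [W.rk_covBy _ _ z.2, hx]; rfl
    have e1 : ∀ w, L z w = ∑ u, (cv u z.1 * W.m u / (W.m x * N1 * N2 * (M - 1)))
        * (if z = w then 0 else cv u w.1) := by
      intro w
      simp only [hL]
      split_ifs
      · simp
      · exact sum_congr rfl fun u _ => by ring
    simp_rw [e1]
    rw [sum_comm]
    have e2 : ∀ u, ∑ w : {z // x ⋖ z}, (cv u z.1 * W.m u / (W.m x * N1 * N2 * (M - 1)))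
        * (if z = w then 0 else cv u w.1) = cv u z.1 * W.m u / (W.m x * N1 * N2) := by
      intro u
      by_cases hu : z.1 ⋖ u
      · have hru : W.rk u = 2 := by rw [W.rk_covBy _ _ hu, hrz]; rfl
        have e3 : ∑ w : {z // x ⋖ z}, (if z = w then 0 else cv u w.1) = M - 1 := by
          have e4 := W.mid_cv hm1 hru hx
          rw [if_pos (z.2.lt.trans hu.lt), mul_one, sum_sub (fun z => x ⋖ z)] at e4
          · rw [← e4, eq_sub_iff_add_eq]
            have : (1 : ℝ) = ∑ w : {z // x ⋖ z}, if z = w then cv u w.1 else 0 := by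
              simp [cv_one hu]
            conv_lhs => rw [this]
            rw [← sum_add_distrib]
            refine sum_congr rfl fun w _ => ?_
            rw [cv_one w.2]
            split_ifs <;> simp
          · exact fun z hz => cv_ne (right_ne_zero_of_mul hz)
        rw [← mul_sum, e3]
        field_simp
      · simp [cv, hu]
    simp_rw [e2]
    rw [← sum_div, W.sum_cv_up hstd (i := 1) hl2 hN2' (by omega) hrz]
    simp only [hwt]
    field_simp
  have hw1 : ∑ z, wt z = 1 := by
    have := conv (fun _ => 1)
    simp only [mul_one] at this
    rw [← this]
    have := W.sum_cv_up hstd (i := 0) hl h1.ne' (by omega) hx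
    simp_rw [mul_comm (W.m _)]
    rw [this, div_self (by positivity)]
  have := aux_spec wt hwp (fun z w => σ * L z w) (fun z w => by rw [hsymm]) σ t
    (fun z => by rw [← mul_sum, hrow]) hw1 ?_ (fun z => g z.1)
  · convert this using 1
    rw [mul_sum]
    refine sum_congr rfl fun z _ => ?_
    rw [mul_sum]
    exact sum_congr rfl fun w _ => by ring
  · intro c h hne hev hort
    have hc : W.IsNontrivEigAdjL x (σ * c) := by
      refine ⟨fun z => if hz : x ⋖ z then h ⟨z, hz⟩ else 0, ?_, ?_, ?_⟩
      · obtain ⟨z, hz⟩ := Function.ne_iff.mp hne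
        exact ⟨z.1, z.2, by simpa [z.2] using hz⟩
      · intro z hz
        unfold AdjL Matrix.mulVec dotProduct
        rw [sum_sub (fun z => x ⋖ z)]
        · have h5 := hev ⟨z, hz⟩
          have hpz := hwp ⟨z, hz⟩
          apply mul_left_cancel₀ hpz.ne'
          rw [mul_sum]
          have h6 : ∀ w : {z // x ⋖ z}, wt ⟨z, hz⟩ * (W.adjMatL x z w.1
              * (if hz : x ⋖ w.1 then h ⟨w.1, hz⟩ else 0)) = L ⟨z, hz⟩ w * h w := by
            intro w
            rw [dif_pos w.2, ← mul_assoc, ← hLA]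
          simp_rw [h6]
          rw [dif_pos hz]
          simp_rw [mul_assoc] at h5
          rw [← mul_sum] at h5
          linear_combination σ * h5 - (∑ w, L ⟨z, hz⟩ w * h w) * hσ
        · intro w hw
          by_contra hxw
          simp [hxw] at hw
      · unfold innerL
        refine Eq.trans ?_ hort
        have : W.linkLvl x 0 = univ.filter (fun z => x ⋖ z) := by
          ext y
          simp only [linkLvl, mem_filter, mem_univ, true_and, add_zero]
          constructor
          · rintro ⟨hle, hr⟩
            have hlt : x < y := lt_of_le_of_ne hle (by rintro rfl; omega)
            obtain ⟨z, hz, hzy⟩ := exists_covBy_le_of_lt hlt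
            rcases hzy.eq_or_lt with rfl | hlt2
            · exact hz
            · obtain ⟨v, hv, hvy⟩ := exists_covBy_le_of_lt hlt2
              have a1 := W.rk_covBy _ _ hz
              have a2 := W.rk_covBy _ _ hv
              have a3 := W.rk_mono hvy
              omega
          · exact fun h => ⟨h.le, W.rk_covBy _ _ h⟩
        rw [this, Finset.sum_subtype (univ.filter (fun z => x ⋖ z)) (p := fun z => x ⋖ z) (by simp)]
        refine sum_congr rfl fun z _ => ?_
        simp only
        rw [dif_pos z.2, W.mL_eq hstd hl hx z.2, mul_one]
    have := hyp _ hc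
    rw [← mul_assoc, hσ, one_mul] at this
    exact this

end aux
end WGP

theorem aux_lam {X Z : Type*} [Fintype X] [Fintype Z]
    (a : Z → X → ℝ) (m0 : X → ℝ) (m1 : Z → ℝ) (N1 lam : ℝ) (f : X → ℝ) (S : Z → ℝ)
    (hS : ∀ z, S z = ∑ x, a z x * f x)
    (h0 : ∀ x, ∑ z, a z x * m1 z = N1 * m0 x)
    (h3 : ∀ z, ∑ x, a z x = N1)
    (hE : ∀ x, ∑ z, m1 z * a z x * (S z - f x) = N1 * (N1 - 1) * lam * (m0 x * f x))
    (hN : 1 < N1) (ha : ∀ z x, 0 ≤ a z x) (hm1 : ∀ z, 0 < m1 z)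
    (hF : 0 < ∑ x, m0 x * f x ^ 2) :
    lam ≤ 1 ∧ (lam = 1 → ∀ z x, a z x ≠ 0 → N1 * f x = S z) := by
  obtain ⟨e1, e2⟩ := aux_core1 a m0 m1 N1 lam f S hS h0 hE
  set F := ∑ x, m0 x * f x ^ 2
  have k : ∀ z, ∑ x, a z x * (N1 * f x - S z) ^ 2
      = N1 * (N1 * ∑ x, a z x * f x ^ 2 - S z ^ 2) := by
    intro z
    have : ∀ x, a z x * (N1 * f x - S z) ^ 2
        = N1 ^ 2 * (a z x * f x ^ 2) - 2 * N1 * S z * (a z x * f x) + S z ^ 2 * a z x := by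
      intro x; ring
    simp_rw [this]
    rw [sum_add_distrib, sum_sub_distrib, ← mul_sum, ← mul_sum, ← mul_sum, h3, ← hS]
    ring
  have tot : ∑ z, m1 z * ∑ x, a z x * (N1 * f x - S z) ^ 2
      = N1 ^ 2 * (N1 - 1) * F * (1 - lam) := by
    have : ∀ z, m1 z * ∑ x, a z x * (N1 * f x - S z) ^ 2
        = N1 ^ 2 * (m1 z * ∑ x, a z x * f x ^ 2) - N1 * (m1 z * S z ^ 2) := by
      intro z; rw [k]; ring
    simp_rw [this]
    rw [sum_sub_distrib, ← mul_sum, ← mul_sum, e1, e2]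
    ring
  have hin : ∀ z x, 0 ≤ a z x * (N1 * f x - S z) ^ 2 :=
    fun z x => mul_nonneg (ha z x) (sq_nonneg _)
  have hz : ∀ z, 0 ≤ m1 z * ∑ x, a z x * (N1 * f x - S z) ^ 2 :=
    fun z => mul_nonneg (hm1 z).le (sum_nonneg fun x _ => hin z x)
  have hK : 0 < N1 ^ 2 * (N1 - 1) * F := by
    have : 0 < N1 - 1 := by linarith
    positivity
  constructor
  · have : 0 ≤ N1 ^ 2 * (N1 - 1) * F * (1 - lam) := tot ▸ sum_nonneg fun z _ => hz z
    have := nonneg_of_mul_nonneg_right this hK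
    linarith
  · intro h1 z x hne
    rw [h1, sub_self, mul_zero] at tot
    have t1 := (sum_eq_zero_iff_of_nonneg (fun z _ => hz z)).mp tot z (mem_univ z)
    have t2 := (mul_eq_zero.mp t1).resolve_left (hm1 z).ne'
    have t3 := (sum_eq_zero_iff_of_nonneg (fun x _ => hin z x)).mp t2 x (mem_univ x)
    have t4 := (mul_eq_zero.mp t3).resolve_left hne
    have := pow_eq_zero_iff (two_ne_zero) |>.mp t4
    linarith

namespace WGP

theorem conn_const {P : Type} [Fintype P] [PartialOrder P] (W : WGP P) (hconn : W.Connected)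
    (f : P → ℝ) (hf : ∀ x y z : P, W.rk x = 0 → W.rk y = 0 → x ⋖ z → y ⋖ z → f x = f y) :
    ∀ x y, W.rk x = 0 → W.rk y = 0 → f x = f y := by
  have step : ∀ x y, W.rk y = 0 → (W.downMat * W.upMat) x y ≠ 0 → W.rk x = 0 ∧ f x = f y := by
    intro x y hy h
    rw [Matrix.mul_apply] at h
    obtain ⟨z, -, hz⟩ := exists_ne_zero_of_sum_ne_zero h
    simp only [downMat, upMat, Matrix.of_apply] at hz
    have c1 : x ⋖ z := by
      by_contra hc; apply hz; rw [W.p_eq_zero hc]; simp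
    have c2 : y ⋖ z := by
      by_contra hc; apply hz; rw [W.p_eq_zero hc]; simp
    have r1 := W.rk_covBy _ _ c1
    have r2 := W.rk_covBy _ _ c2
    have hx : W.rk x = 0 := by omega
    exact ⟨hx, hf x y z hx hy c1 c2⟩
  have pw : ∀ (j : ℕ) x y, W.rk y = 0 → ((W.downMat * W.upMat) ^ j) x y ≠ 0 →
      W.rk x = 0 ∧ f x = f y := by
    intro j
    induction j with
    | zero =>
      intro x y hy h
      rw [pow_zero, Matrix.one_apply] at h
      split_ifs at h with hxy
      · subst hxy; exact ⟨hy, rfl⟩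
      · exact absurd rfl h
    | succ j ih =>
      intro x y hy h
      rw [pow_succ, Matrix.mul_apply] at h
      obtain ⟨v, -, hv⟩ := exists_ne_zero_of_sum_ne_zero h
      obtain ⟨s1, s2⟩ := step v y hy (right_ne_zero_of_mul hv)
      obtain ⟨s3, s4⟩ := ih x v s1 (left_ne_zero_of_mul hv)
      exact ⟨s3, s4.trans s2⟩
  intro x y hx hy
  obtain ⟨j, -, h⟩ := hconn y x hy hx
  exact (pw j x y hy h).2

end WGP

/-- the trickling down theorem for `2`-skeleton regular
standard posets. -/
theorem stmt19 {P : Type} [Fintype P] [PartialOrder P] (W : WGP P)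
    (hd : 2 ≤ W.d) (hstd : W.Standard)
    (Nlow1 Nlow2 Nmid1 R : ℕ)
    (hl1 : W.LowerRegAt 1 Nlow1) (hl2 : W.LowerRegAt 2 Nlow2)
    (hm1 : W.MiddleRegAt 1 Nmid1) (hwye : W.WyeReg R)
    (hN1 : 3 ≤ Nlow1) (hN2 : 2 ≤ Nmid1)
    (hR : ((Nlow1 : ℝ) - 2)
      < ((Nlow2 : ℝ) * (Nlow1 : ℝ) / (Nmid1 : ℝ) - 2) * (R : ℝ))
    (hconn : W.Connected)
    (hlconn : ∀ x : P, W.rk x = 0 → W.LinkConnected x)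
    (ν μ : ℝ) (hνμ : ν ≤ μ) (hμ1 : μ < 1)
    (heig : ∀ x : P, W.rk x = 0 → ∀ c : ℝ, W.IsNontrivEigAdjL x c → ν ≤ c ∧ c ≤ μ) :
    ∀ lam : ℝ, W.IsNontrivEigAdj lam →
      (ν / ((Nlow1 : ℝ) - 1)
          - ((Nlow2 : ℝ) * (Nlow1 : ℝ) - (Nmid1 : ℝ)) * (R : ℝ) * ((R : ℝ) - 1) /
              (((Nmid1 : ℝ) - 1) * (Nmid1 : ℝ) ^ 2 * ((Nlow1 : ℝ) - 1) ^ 2)) / (1 - ν)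
        ≤ lam ∧
      lam ≤ (μ / ((Nlow1 : ℝ) - 1)
          - ((Nlow2 : ℝ) * (Nlow1 : ℝ) - (Nmid1 : ℝ)) * (R : ℝ) * ((R : ℝ) - 1) /
              (((Nmid1 : ℝ) - 1) * (Nmid1 : ℝ) ^ 2 * ((Nlow1 : ℝ) - 1) ^ 2)) / (1 - μ) := by
  intro lam hlam
  obtain ⟨f, ⟨y0, hy0, hfy0⟩, hadj, hort⟩ := hlam
  have hN1' : (3 : ℝ) ≤ Nlow1 := by exact_mod_cast hN1
  have hM' : (2 : ℝ) ≤ Nmid1 := by exact_mod_cast hN2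
  obtain ⟨z0, hz0⟩ := W.exists_cover (x := y0) (by omega)
  have hrz0 : W.rk z0 = 1 := by rw [W.rk_covBy _ _ hz0, hy0]; rfl
  obtain ⟨u0, hu0⟩ := W.exists_cover (x := z0) (by omega)
  have hru0 : W.rk u0 = 2 := by rw [W.rk_covBy _ _ hu0, hrz0]; rfl
  have hN2p : 0 < Nlow2 := by
    rw [← hl2 u0 hru0, card_pos]
    exact ⟨z0, by simpa using hu0⟩
  have hN2r : (0 : ℝ) < Nlow2 := by exact_mod_cast hN2p
  have rc0 : ∀ x z : P, x ⋖ z → W.rk z = 1 → W.rk x = 0 := by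
    intro x z h hz; have := W.rk_covBy _ _ h; omega
  have rc1 : ∀ x z : P, x ⋖ z → W.rk x = 0 → W.rk z = 1 := by
    intro x z h hz; have := W.rk_covBy _ _ h; omega
  have rc2 : ∀ x z : P, x ⋖ z → W.rk z = 2 → W.rk x = 1 := by
    intro x z h hz; have := W.rk_covBy _ _ h; omega
  have rc3 : ∀ x z : P, x ⋖ z → W.rk x = 1 → W.rk z = 2 := by
    intro x z h hz; have := W.rk_covBy _ _ h; omega
  set S : P → ℝ := fun z => ∑ y, WGP.cv z y * f y with hSd
  set X := {x : P // W.rk x = 0}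
  set Z := {x : P // W.rk x = 1}
  set U := {x : P // W.rk x = 2}
  set a : Z → X → ℝ := fun z x => WGP.cv z.1 x.1 with had
  set b : U → Z → ℝ := fun u z => WGP.cv u.1 z.1 with hbd
  set e : U → X → ℝ := fun u x => if x.1 < u.1 then 1 else 0 with hed
  set m0 : X → ℝ := fun x => W.m x.1 with hm0
  set m1 : Z → ℝ := fun x => W.m x.1 with hm1d
  set m2 : U → ℝ := fun x => W.m x.1 with hm2
  have hS : ∀ z : Z, S z.1 = ∑ x : X, a z x * f x.1 := by
    intro z
    exact WGP.sum_sub (fun x => W.rk x = 0) (fun y => WGP.cv z.1 y * f y)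
      fun x h => rc0 _ _ (WGP.cv_ne (left_ne_zero_of_mul h)) z.2
  have h0 : ∀ x : X, ∑ z : Z, a z x * m1 z = Nlow1 * m0 x := by
    intro x
    rw [← W.sum_cv_up hstd (i := 0) hl1 (by linarith) (by omega) x.2]
    exact (WGP.sum_sub (fun z => W.rk z = 1) (fun z => WGP.cv z x.1 * W.m z)
      fun z h => rc1 _ _ (WGP.cv_ne (left_ne_zero_of_mul h)) x.2).symm
  have h1 : ∀ z : Z, ∑ u : U, b u z * m2 u = Nlow2 * m1 z := by
    intro z
    rw [← W.sum_cv_up hstd (i := 1) hl2 hN2r.ne' (by omega) z.2]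
    exact (WGP.sum_sub (fun u => W.rk u = 2) (fun u => WGP.cv u z.1 * W.m u)
      fun u h => rc3 _ _ (WGP.cv_ne (left_ne_zero_of_mul h)) z.2).symm
  have h3 : ∀ z : Z, ∑ x : X, a z x = Nlow1 := by
    intro z
    rw [← W.sum_cv_low hl1 z.2]
    exact (WGP.sum_sub (fun x => W.rk x = 0) (fun y => WGP.cv z.1 y)
      fun x h => rc0 _ _ (WGP.cv_ne h) z.2).symm
  have h4 : ∀ u : U, ∑ z : Z, b u z = Nlow2 := by
    intro u
    rw [← W.sum_cv_low hl2 u.2]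
    exact (WGP.sum_sub (fun x => W.rk x = 1) (fun y => WGP.cv u.1 y)
      fun x h => rc2 _ _ (WGP.cv_ne h) u.2).symm
  have h5 : ∀ (u : U) (x : X), ∑ z : Z, b u z * a z x = Nmid1 * e u x := by
    intro u x
    rw [hed, ← W.mid_cv hm1 u.2 x.2]
    exact (WGP.sum_sub (fun x => W.rk x = 1) (fun z => WGP.cv u.1 z * WGP.cv z x.1)
      fun z h => rc2 _ _ (WGP.cv_ne (left_ne_zero_of_mul h)) u.2).symm
  have h6 : ∀ (u : U) (x y : X), x ≠ y →
      ∑ z : Z, b u z * (a z x * a z y) = R * (e u x * e u y) := by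
    intro u x y hxy
    rw [hed, ← W.wye_cv hwye u.2 x.2 y.2 (fun h => hxy (Subtype.ext h))]
    exact (WGP.sum_sub (fun x => W.rk x = 1)
      (fun z => WGP.cv u.1 z * (WGP.cv z x.1 * WGP.cv z y.1))
      fun z h => rc2 _ _ (WGP.cv_ne (left_ne_zero_of_mul h)) u.2).symm
  have ha : ∀ z x, a z x * a z x = a z x := fun z x => WGP.cv_sq _ _
  have he : ∀ u x, e u x * e u x = e u x := by
    intro u x; simp only [hed]; split_ifs <;> simp
  have hM0 : (Nmid1 : ℝ) ≠ 0 := by linarith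
  have ha0 : (0 : ℝ) < (Nlow1 : ℝ) - 1 := by linarith
  have hM1 : (0 : ℝ) < (Nmid1 : ℝ) - 1 := by linarith
  set V : ℝ := Nlow1 * Nlow2 / Nmid1 with hVd
  have hV1 : V * Nmid1 = Nlow1 * Nlow2 := by rw [hVd]; field_simp
  have hV : ∀ u, ∑ x, e u x = V := by
    intro u
    apply mul_left_cancel₀ hM0
    rw [mul_comm _ V, hV1, mul_sum]
    simp_rw [← h5]
    rw [sum_comm]
    simp_rw [← mul_sum, h3]
    rw [← sum_mul, h4]; ring
  have hV2 : (V - 1) * R = Nmid1 * (Nlow1 - 1) := by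
    set x : X := ⟨y0, hy0⟩
    set u : U := ⟨u0, hru0⟩
    have hex : e u x = 1 := by
      simp only [hed]; rw [if_pos (hz0.lt.trans hu0.lt)]
    have s1 : ∑ y ∈ univ.erase x, ∑ z : Z, b u z * (a z x * a z y) = R * (V - 1) := by
      rw [← hV u, ← add_sum_erase _ (fun y => e u y) (mem_univ x), hex, add_sub_cancel_left,
        mul_sum]
      refine sum_congr rfl fun y hy => ?_
      rw [h6 u x y (ne_of_mem_erase hy).symm, hex, one_mul]
    have s2 : ∑ y ∈ univ.erase x, ∑ z : Z, b u z * (a z x * a z y)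
        = (Nlow1 - 1) * ∑ z, b u z * a z x := by
      rw [sum_comm, mul_sum]
      refine sum_congr rfl fun z _ => ?_
      have : ∑ y ∈ univ.erase x, a z y = Nlow1 - a z x := by
        rw [← h3 z, ← add_sum_erase _ (fun y => a z y) (mem_univ x)]; ring
      rw [← mul_sum, ← mul_sum, this]
      linear_combination - b u z * ha z x
    rw [s1, h5, hex] at s2
    linarith
  have hEP : ∀ x : X, ∑ z, W.m z * WGP.cv z x.1 * (S z - f x.1)
      = Nlow1 * (Nlow1 - 1) * lam * (m0 x * f x.1) := by
    intro x
    rw [← W.adj_eq hstd hl1 hN1 x.2 f, hadj x.1 x.2]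
    ring
  have hE : ∀ x : X, ∑ z : Z, m1 z * a z x * (S z.1 - f x.1)
      = Nlow1 * (Nlow1 - 1) * lam * (m0 x * f x.1) := by
    intro x
    rw [← hEP x]
    exact (WGP.sum_sub (fun z => W.rk z = 1) (fun z => W.m z * WGP.cv z x.1 * (S z - f x.1))
      fun z h => rc1 _ _ (WGP.cv_ne (right_ne_zero_of_mul (left_ne_zero_of_mul h))) x.2).symm
  set F : ℝ := ∑ x : X, m0 x * f x.1 ^ 2 with hFd
  have hF : 0 < F := by
    refine sum_pos' (fun x _ => mul_nonneg (W.m_pos _).le (sq_nonneg _)) ⟨⟨y0, hy0⟩, mem_univ _, ?_⟩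
    exact mul_pos (W.m_pos _) (by positivity)
  -- lam < 1
  have hlam1 : lam < 1 := by
    obtain ⟨l1, l2⟩ := aux_lam a m0 m1 (Nlow1 : ℝ) lam (fun x => f x.1) (fun z => S z.1)
      hS h0 h3 hE (by linarith)
      (fun z x => by simp only [had, WGP.cv]; split_ifs <;> simp) (fun z => W.m_pos _) hF
    refine lt_of_le_of_ne l1 fun h => ?_
    have l3 := l2 h
    have hc := W.conn_const hconn f (by
      intro x y z hx hy hxz hyz
      have q1 := l3 ⟨z, rc1 _ _ hxz hx⟩ ⟨x, hx⟩ (by simp [had, WGP.cv_one hxz])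
      have q2 := l3 ⟨z, rc1 _ _ hxz hx⟩ ⟨y, hy⟩ (by simp [had, WGP.cv_one hyz])
      have hne : (Nlow1 : ℝ) ≠ 0 := by linarith
      exact mul_left_cancel₀ hne (q1.trans q2.symm))
    have : W.innerAt 0 f (fun _ => 1) = f y0 * ∑ x ∈ W.lvl 0, W.m x := by
      unfold WGP.innerAt
      rw [mul_sum]
      refine sum_congr rfl fun x hx => ?_
      simp only [WGP.lvl, mem_filter, mem_univ, true_and] at hx
      rw [hc x y0 hx hy0]; ring
    rw [this] at hort
    have hp : 0 < ∑ x ∈ W.lvl 0, W.m x :=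
      sum_pos (fun x _ => W.m_pos x) ⟨y0, by simp [WGP.lvl, hy0]⟩
    rcases mul_eq_zero.mp hort with h | h
    · exact hfy0 h
    · exact hp.ne' h
  have hn := aux_n a m0 m1 (Nlow1 : ℝ) lam (fun x => f x.1) (fun z => S z.1) hS h0 h3 hE
  have hq := aux_q a b e m0 m1 m2 (Nlow1 : ℝ) Nlow2 Nmid1 R V lam (fun x => f x.1)
    (fun z => S z.1) ha he hS h0 h1 h3 h5 h6 hV hV1 hV2 hM0 hE
  rw [← hFd] at hn hq
  have main : ∀ σ t : ℝ, σ * σ = 1 →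
      (∀ x, W.rk x = 0 → ∀ c, W.IsNontrivEigAdjL x c → σ * c ≤ t) →
      σ * (((Nmid1 : ℝ) - 1) * (Nlow1 - 1) * lam + (R - 1) * (1 - lam)) / (Nmid1 - 1)
        ≤ t * (1 + (Nlow1 - 2) * lam) + (σ - t) * ((Nlow1 - 1) * lam ^ 2) := by
    intro σ t hσ hyp
    have per : ∀ x : X, σ * (∑ u : U, m2 u * ((∑ z : Z, b u z * (a z x * (S z.1 - f x.1))) ^ 2
        - ∑ z : Z, b u z * (a z x * (S z.1 - f x.1) ^ 2))) / (Nlow1 * Nlow2 * (Nmid1 - 1))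
        ≤ t * (∑ z : Z, m1 z * a z x * (S z.1 - f x.1) ^ 2) / Nlow1
          + (σ - t) * ((Nlow1 - 1) * lam) ^ 2 * (m0 x * f x.1 ^ 2) := by
      intro x
      have lb := W.link_bound hd hstd hl1 hl2 hm1 hN1 hN2 hN2p x.2 σ t (hyp x.1 x.2) hσ
        (fun z => S z - f x.1)
      rw [hEP x] at lb
      have c1 : ∑ z, W.m z * WGP.cv z x.1 * (S z - f x.1) ^ 2
          = ∑ z : Z, m1 z * a z x * (S z.1 - f x.1) ^ 2 :=
        WGP.sum_sub (fun z => W.rk z = 1) (fun z => W.m z * WGP.cv z x.1 * (S z - f x.1) ^ 2)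
          fun z h => rc1 _ _ (WGP.cv_ne (right_ne_zero_of_mul (left_ne_zero_of_mul h))) x.2
      have c2 : ∀ (u : P) (φ : P → ℝ), ∑ z, WGP.cv u z * (WGP.cv z x.1 * φ z)
          = ∑ z : Z, WGP.cv u z.1 * (a z x * φ z.1) := fun u φ =>
        WGP.sum_sub (fun z => W.rk z = 1) (fun z => WGP.cv u z * (WGP.cv z x.1 * φ z))
          fun z h => rc1 _ _ (WGP.cv_ne (left_ne_zero_of_mul (right_ne_zero_of_mul h))) x.2
      have c3 : ∑ u, W.m u * ((∑ z, WGP.cv u z * (WGP.cv z x.1 * (S z - f x.1))) ^ 2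
            - ∑ z, WGP.cv u z * (WGP.cv z x.1 * (S z - f x.1) ^ 2))
          = ∑ u : U, m2 u * ((∑ z : Z, b u z * (a z x * (S z.1 - f x.1))) ^ 2
            - ∑ z : Z, b u z * (a z x * (S z.1 - f x.1) ^ 2)) := by
        rw [WGP.sum_sub (fun u => W.rk u = 2)]
        · refine sum_congr rfl fun u _ => ?_
          rw [c2 u.1 (fun z => S z - f x.1), c2 u.1 (fun z => (S z - f x.1) ^ 2)]
        · intro u hu
          by_contra hr
          have hz : ∀ z : Z, WGP.cv u z.1 = 0 := by
            intro z
            by_contra hne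
            exact hr (rc3 _ _ (WGP.cv_ne hne) z.2)
          apply hu
          rw [c2 u (fun z => S z - f x.1), c2 u (fun z => (S z - f x.1) ^ 2)]
          simp [hz]
      rw [c1, c3] at lb
      have hmx : 0 < W.m x.1 := W.m_pos _
      have lb2 := mul_le_mul_of_nonneg_left lb hmx.le
      have hne : (Nlow1 : ℝ) ≠ 0 := by linarith
      have hm0x : W.m x.1 = m0 x := rfl
      rw [hm0x] at lb2 hmx
      have hmx' := hmx.ne'
      generalize ∑ u : U, m2 u * ((∑ z : Z, b u z * (a z x * (S z.1 - f x.1))) ^ 2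
        - ∑ z : Z, b u z * (a z x * (S z.1 - f x.1) ^ 2)) = Q1 at lb2 ⊢
      generalize ∑ z : Z, m1 z * a z x * (S z.1 - f x.1) ^ 2 = Q2 at lb2 ⊢
      generalize m0 x = mx at lb2 hmx' ⊢
      refine (le_of_eq ?_).trans (lb2.trans (le_of_eq ?_))
      · field_simp
      · field_simp
    have tot := sum_le_sum (s := univ) fun x (_ : x ∈ univ) => per x
    rw [← sum_div, ← mul_sum, hq, sum_add_distrib, ← sum_div, ← mul_sum, hn, ← mul_sum,
      ← hFd] at tot
    have hne : (0 : ℝ) < Nlow1 := by linarith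
    have hK : 0 < ((Nlow1 : ℝ) - 1) * F := by positivity
    refine le_of_mul_le_mul_left ?_ hK
    convert tot using 1
    · field_simp
    · field_simp
  have m1' := main 1 μ (by norm_num) (fun x hx c hc => by rw [one_mul]; exact (heig x hx c hc).2)
  have m2' := main (-1) (-ν) (by norm_num)
    (fun x hx c hc => by have := (heig x hx c hc).1; linarith)
  have hB : ((Nlow2 : ℝ) * (Nlow1 : ℝ) - (Nmid1 : ℝ)) * (R : ℝ) * ((R : ℝ) - 1) /
              (((Nmid1 : ℝ) - 1) * (Nmid1 : ℝ) ^ 2 * ((Nlow1 : ℝ) - 1) ^ 2)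
      = ((R : ℝ) - 1) / ((Nmid1 - 1) * (Nlow1 - 1)) := by
    have : ((Nlow2 : ℝ) * (Nlow1 : ℝ) - (Nmid1 : ℝ)) * (R : ℝ) = Nmid1 ^ 2 * (Nlow1 - 1) := by
      linear_combination (Nmid1 : ℝ) * hV2 - R * hV1
    rw [this]
    field_simp
  rw [hB]
  have hl : 0 < 1 - lam := by linarith
  set A : ℝ := (Nlow1 : ℝ) - 1 with hA
  set C : ℝ := ((R : ℝ) - 1) / (Nmid1 - 1) with hC
  have hBC : ((R : ℝ) - 1) / ((Nmid1 - 1) * A) = C / A := by rw [hC]; field_simp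
  have hexp : ∀ σ : ℝ, σ * (((Nmid1 : ℝ) - 1) * A * lam + (R - 1) * (1 - lam)) / (Nmid1 - 1)
      = σ * (A * lam + C * (1 - lam)) := by
    intro σ; rw [hC]; field_simp
  rw [hexp] at m1' m2'
  have hA2 : (Nlow1 : ℝ) - 2 = A - 1 := by rw [hA]; ring
  rw [hA2] at m1' m2'
  rw [hBC, ← sub_div, ← sub_div, div_div, div_div]
  constructor
  · rw [div_le_iff₀ (mul_pos ha0 (by linarith))]
    refine le_of_mul_le_mul_left ?_ hl
    nlinarith [m2']
  · rw [le_div_iff₀ (mul_pos ha0 (by linarith))]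
    refine le_of_mul_le_mul_left ?_ hl
    nlinarith [m1']
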